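/- arXiv:1411.4234 — 5 statements merged into one kernel-verified Lean document; each statement's English description precedes it below -/
import Mathlib

section
/- Let K ∈ {−1, 0, 1}, T > 0, and let f : (0, T) → ℝ be twice differentiable with f(t) > 0 and 1 − K·f(t)² > 0 for all t ∈ (0, T). If f satisfies the Dirac-flow ODE 2·f'(t)/f(t) = √(4/f(t)² − 4K) for all t ∈ (0, T), then f'(t) = √(1 − K·f(t)²) and f''(t) = −K·f(t) for all t ∈ (0, T); in particular f'(t)² = 1 − K·f(t)² and f''(t)·f(t) = −K·f(t)² hold, which are exactly the conditions that the warped-product metric dt² + f(t)²·g₀ on (0,T) × S³ have constant sectional curvature K. -/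
/-!
Multiplying the flow equation by `f / 2 > 0` turns it into `f' = √(1 - K f²)`, so `f' > 0` and
`f'² = 1 - K f²` on the whole interval. Differentiating this identity gives
`2 f' f'' = -2 K f f'`, and cancelling `f'` gives `f'' = -K f`.
-/

open Real Set

/-- a positive solution of the Dirac-flow ODE `2 f'/f = √(4/f² − 4K)`
with `1 − K f² > 0` satisfies `f' = √(1 − K f²)`, `f'' = −K f`, and in particular
`f'² = 1 − K f²` and `f'' f = −K f²`, the constant-curvature conditions for the
warped-product metric `dt² + f² g₀`. -/
theorem dirac_flow_gives_constant_curvature (K : ℝ) (hK : K ∈ ({-1, 0, 1} : Set ℝ))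
    (T : ℝ) (hT : 0 < T) (f f' f'' : ℝ → ℝ)
    (hd1 : ∀ t ∈ Set.Ioo 0 T, HasDerivAt f (f' t) t)
    (hd2 : ∀ t ∈ Set.Ioo 0 T, HasDerivAt f' (f'' t) t)
    (hpos : ∀ t ∈ Set.Ioo 0 T, 0 < f t)
    (hcurv : ∀ t ∈ Set.Ioo 0 T, 0 < 1 - K * f t ^ 2)
    (hode : ∀ t ∈ Set.Ioo 0 T, 2 * f' t / f t = Real.sqrt (4 / f t ^ 2 - 4 * K)) :
    ∀ t ∈ Set.Ioo 0 T,
      f' t = Real.sqrt (1 - K * f t ^ 2) ∧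
      f'' t = -K * f t ∧
      f' t ^ 2 = 1 - K * f t ^ 2 ∧
      f'' t * f t = -K * f t ^ 2 := by
  have hsqrt : ∀ t ∈ Set.Ioo 0 T, f' t = Real.sqrt (1 - K * f t ^ 2) := by
    intro t ht
    have hf := hpos t ht
    have hrad : 4 / f t ^ 2 - 4 * K = (2 / f t) ^ 2 * (1 - K * f t ^ 2) := by
      field_simp
      ring
    have h := hode t ht
    rw [hrad, Real.sqrt_mul (sq_nonneg _), Real.sqrt_sq (by positivity)] at h
    field_simp at h
    rw [h, mul_comm K]
  have hsq : ∀ t ∈ Set.Ioo 0 T, f' t ^ 2 = 1 - K * f t ^ 2 := fun t ht => by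
    rw [hsqrt t ht, Real.sq_sqrt (hcurv t ht).le]
  intro t ht
  have hf'pos : 0 < f' t := by
    rw [hsqrt t ht]
    exact Real.sqrt_pos.2 (hcurv t ht)
  have hsecond : f'' t = -K * f t := by
    have hleft := (hd2 t ht).fun_pow 2
    have hright := (((hd1 t ht).fun_pow 2).const_mul K).const_sub 1
    -- The two sides agree on the open interval, hence near `t`, so their derivatives coincide.
    have heq := hleft.unique
      (hright.congr_of_eventuallyEq (Filter.eventually_of_mem (isOpen_Ioo.mem_nhds ht) hsq))
    norm_num at heq
    exact mul_left_cancel₀ hf'pos.ne' (by linarith)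
  refine ⟨hsqrt t ht, hsecond, hsq t ht, ?_⟩
  rw [hsecond]
  ring
end

section
/- Let c₁ > 0, c₂ ∈ ℝ, and let β : (t₁, t₂) → ℝ be differentiable with 0 < β(t) and 32·β(t)² < c₁² for all t. Suppose that for all t ∈ (t₁, t₂), −β(t)/16 − (√2/128)·c₁·arctan(4√2·β(t)/√(c₁² − 32β(t)²)) = t + c₂. Then for all t ∈ (t₁, t₂), β'(t) = −16·√(c₁² − 32β(t)²) / (c₁ + √(c₁² − 32β(t)²)). -/
open Real Set

/-!
Write `S = √(c₁² - 32β²)`. The substitution `sin θ = 4√2 β / c₁` turns the arctangent into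
`θ = arcsin (4√2 β / c₁)`, so its derivative with respect to `β` is just `4√2 / S`
(`hasDerivAt_arctan_div_sqrt`). The chain rule applied to the implicit relation then gives
`-(β' / 16) (1 + c₁ / S) = 1`, which is solved for `β'` using `S > 0` and `c₁ + S > 0`.
-/

theorem hasDerivAt_arctan_div_sqrt {c x : ℝ} (hx : 32 * x ^ 2 < c ^ 2) :
    HasDerivAt (fun y => Real.arctan (4 * Real.sqrt 2 * y / Real.sqrt (c ^ 2 - 32 * y ^ 2)))
      (4 * Real.sqrt 2 / Real.sqrt (c ^ 2 - 32 * x ^ 2)) x := by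
  have hR : 0 < c ^ 2 - 32 * x ^ 2 := by linarith
  have hS := Real.sqrt_pos.mpr hR
  have hS2 := Real.sq_sqrt hR.le
  have h2 : Real.sqrt 2 ^ 2 = 2 := Real.sq_sqrt (by norm_num)
  have hrad : HasDerivAt (fun y : ℝ => c ^ 2 - 32 * y ^ 2) (-(64 * x)) x := by
    refine (((hasDerivAt_pow 2 x).const_mul 32).const_sub (c ^ 2)).congr_deriv ?_
    push_cast
    ring
  have hnum : HasDerivAt (fun y : ℝ => 4 * Real.sqrt 2 * y) (4 * Real.sqrt 2) x := by
    simpa using (hasDerivAt_id x).const_mul (4 * Real.sqrt 2)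
  have h := (hnum.div (hrad.sqrt hR.ne') hS.ne').arctan
  refine h.congr_deriv ?_
  simp only [Pi.div_apply]
  set S := Real.sqrt (c ^ 2 - 32 * x ^ 2)
  set r := Real.sqrt 2
  have hc : 0 < c ^ 2 := by nlinarith [sq_nonneg x]
  -- The secant-squared factor collapses because `32 x² + S² = c²`.
  have hsec : 1 + (4 * r * x / S) ^ 2 = c ^ 2 / S ^ 2 := by
    field_simp
    linear_combination hS2 + 16 * x ^ 2 * h2
  rw [hsec]
  have hc0 : c ≠ 0 := by
    rintro rfl
    simp at hc
  field_simp
  linear_combination 2 * r * hS2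

/-- differentiating the implicit general solution (7) of the Ricci-flow
system yields the first-order equation
`β' = −16√(c₁² − 32β²)/(c₁ + √(c₁² − 32β²))`. -/
theorem implicit_solution_first_order (c₁ c₂ t₁ t₂ : ℝ) (hc₁ : 0 < c₁)
    (β β' : ℝ → ℝ)
    (hβ : ∀ t ∈ Set.Ioo t₁ t₂, HasDerivAt β (β' t) t)
    (hpos : ∀ t ∈ Set.Ioo t₁ t₂, 0 < β t)
    (hbound : ∀ t ∈ Set.Ioo t₁ t₂, 32 * β t ^ 2 < c₁ ^ 2)
    (himplicit : ∀ t ∈ Set.Ioo t₁ t₂,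
      -(β t) / 16 - Real.sqrt 2 / 128 * c₁ *
        Real.arctan (4 * Real.sqrt 2 * β t / Real.sqrt (c₁ ^ 2 - 32 * β t ^ 2)) = t + c₂) :
    ∀ t ∈ Set.Ioo t₁ t₂,
      β' t = -16 * Real.sqrt (c₁ ^ 2 - 32 * β t ^ 2) /
        (c₁ + Real.sqrt (c₁ ^ 2 - 32 * β t ^ 2)) := by
  intro t ht
  have hR : 0 < c₁ ^ 2 - 32 * β t ^ 2 := by linarith [hbound t ht]
  have hS := Real.sqrt_pos.mpr hR
  have h2 : Real.sqrt 2 ^ 2 = 2 := Real.sq_sqrt (by norm_num)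
  have hl := ((hβ t ht).neg.div_const 16).sub
    (((hasDerivAt_arctan_div_sqrt (hbound t ht)).comp t (hβ t ht)).const_mul
      (Real.sqrt 2 / 128 * c₁))
  have hr : HasDerivAt (fun s : ℝ => s + c₂) 1 t := (hasDerivAt_id t).add_const c₂
  -- The relation holds on a neighbourhood of `t`, so both sides have the same derivative at `t`.
  have heq := hl.unique (hr.congr_of_eventuallyEq
    (Filter.eventuallyEq_of_mem (isOpen_Ioo.mem_nhds ht) himplicit))
  set S := Real.sqrt (c₁ ^ 2 - 32 * β t ^ 2)
  set r := Real.sqrt 2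
  rw [eq_div_iff (by positivity)]
  field_simp at heq
  linear_combination -(1 / 128) * heq - β' t * c₁ / 2 * h2
end

section
/- Let c₁ > 0 and let β : (t₁, t₂) → ℝ be twice differentiable with 0 < β(t) and 32·β(t)² < c₁² for all t. If β'(t) = −16·√(c₁² − 32β(t)²)/(c₁ + √(c₁² − 32β(t)²)) for all t ∈ (t₁, t₂), then β satisfies β(t)·β''(t) + 2β'(t)² + 48β'(t) + 256 = 0 for all t ∈ (t₁, t₂). -/
open Real Set

/-!
Write `s = √(c₁² − 32β²)`, which is positive, so `s' = −32ββ'/s`. Differentiating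
`β' = −16s/(c₁ + s)` gives `β'' = −16c₁s'/(c₁ + s)² = −8192c₁β/(c₁ + s)³`. Since
`32β² = (c₁ − s)(c₁ + s)`, this yields `ββ'' = −256c₁(c₁ − s)/(c₁ + s)²`, and the second-order
equation becomes a polynomial identity in `c₁` and `s` over `(c₁ + s)²`.
-/

/-- the first-order equation
`β' = −16√(c₁² − 32β²)/(c₁ + √(c₁² − 32β²))` is a first integral of the second-order
ODE `ββ'' + 2β'² + 48β' + 256 = 0`. -/
theorem first_order_implies_second_order (c₁ t₁ t₂ : ℝ) (hc₁ : 0 < c₁)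
    (β β' β'' : ℝ → ℝ)
    (hβ : ∀ t ∈ Set.Ioo t₁ t₂, HasDerivAt β (β' t) t)
    (hβ' : ∀ t ∈ Set.Ioo t₁ t₂, HasDerivAt β' (β'' t) t)
    (hpos : ∀ t ∈ Set.Ioo t₁ t₂, 0 < β t)
    (hbound : ∀ t ∈ Set.Ioo t₁ t₂, 32 * β t ^ 2 < c₁ ^ 2)
    (hode : ∀ t ∈ Set.Ioo t₁ t₂,
      β' t = -16 * Real.sqrt (c₁ ^ 2 - 32 * β t ^ 2) /
        (c₁ + Real.sqrt (c₁ ^ 2 - 32 * β t ^ 2))) :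
    ∀ t ∈ Set.Ioo t₁ t₂,
      β t * β'' t + 2 * β' t ^ 2 + 48 * β' t + 256 = 0 := by
  intro t ht
  have hrad : 0 < c₁ ^ 2 - 32 * β t ^ 2 := by linarith [hbound t ht]
  have hs := Real.sqrt_pos.mpr hrad
  have hsq := Real.sq_sqrt hrad.le
  have hS : HasDerivAt (fun x => Real.sqrt (c₁ ^ 2 - 32 * β x ^ 2))
      (-32 * β t * β' t / Real.sqrt (c₁ ^ 2 - 32 * β t ^ 2)) t := by
    have h := ((((hβ t ht).pow 2).const_mul 32).const_sub (c₁ ^ 2)).sqrt hrad.ne'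
    simp only [Pi.pow_apply] at h
    refine h.congr_deriv ?_
    field_simp
    ring
  have hden : c₁ + Real.sqrt (c₁ ^ 2 - 32 * β t ^ 2) ≠ 0 := by positivity
  have hR := (hS.const_mul (-16)).div (hS.const_add c₁) hden
  -- `hode` holds on a neighbourhood of `t`, so both sides have the same derivative there.
  have hev : β' =ᶠ[nhds t] fun x => -16 * Real.sqrt (c₁ ^ 2 - 32 * β x ^ 2) /
      (c₁ + Real.sqrt (c₁ ^ 2 - 32 * β x ^ 2)) := by
    filter_upwards [isOpen_Ioo.mem_nhds ht] with x hx using hode x hx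
  have h2 := (hβ' t ht).unique (hR.congr_of_eventuallyEq hev)
  rw [h2, hode t ht]
  generalize Real.sqrt (c₁ ^ 2 - 32 * β t ^ 2) = s at *
  have hb : β t ^ 2 = (c₁ ^ 2 - s ^ 2) / 32 := by linarith
  field_simp
  rw [hb]
  ring
end

section
/- Let c₁ > 0, t₀ ∈ ℝ, and let β : (t₁, t₀) → ℝ satisfy 0 < β(t), 32·β(t)² < c₁², and β'(t) = −16·√(c₁² − 32β(t)²)/(c₁ + √(c₁² − 32β(t)²)) for all t, with β(t) → 0 as t → t₀ from the left. Then β'(t) → −8 as t → t₀⁻, and also −(β'(t) + 16)²/8 → −8 as t → t₀⁻ (the latter quantity equals α'(t) for α = β(β'+16)/8 along solutions of the Ricci-flow system α' = −8α²/β², β' + 16 = 8α/β). -/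
/-!
The right-hand side of the differential equation is a continuous function of `β` at `β = 0`:
as `β → 0` the square root tends to `√(c₁²) = c₁`, where `c₁ > 0` is used, so `β'` tends to
`-16 c₁ / (c₁ + c₁) = -8`. The second limit is then `-(-8 + 16)² / 8 = -8`, by continuity of
`x ↦ -(x + 16)² / 8`.
-/

open Real Set Filter

/-- as the singular time `t₀` is approached, `β' → −8` and the quantity
`−(β' + 16)²/8` (which equals `α'` along solutions) also tends to `−8`. -/
theorem derivatives_tend_to_neg_eight (c₁ t₁ t₀ : ℝ) (hc₁ : 0 < c₁) (ht : t₁ < t₀)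
    (β β' : ℝ → ℝ)
    (hβ : ∀ t ∈ Set.Ioo t₁ t₀, HasDerivAt β (β' t) t)
    (hpos : ∀ t ∈ Set.Ioo t₁ t₀, 0 < β t)
    (hbound : ∀ t ∈ Set.Ioo t₁ t₀, 32 * β t ^ 2 < c₁ ^ 2)
    (hode : ∀ t ∈ Set.Ioo t₁ t₀,
      β' t = -16 * Real.sqrt (c₁ ^ 2 - 32 * β t ^ 2) /
        (c₁ + Real.sqrt (c₁ ^ 2 - 32 * β t ^ 2)))
    (hlim : Tendsto β (nhdsWithin t₀ (Set.Ioo t₁ t₀)) (nhds 0)) :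
    Tendsto β' (nhdsWithin t₀ (Set.Ioo t₁ t₀)) (nhds (-8)) ∧
    Tendsto (fun t => -(β' t + 16) ^ 2 / 8)
      (nhdsWithin t₀ (Set.Ioo t₁ t₀)) (nhds (-8)) := by
  have key : Tendsto β' (nhdsWithin t₀ (Set.Ioo t₁ t₀)) (nhds (-8)) := by
    have hs : Tendsto (fun t => Real.sqrt (c₁ ^ 2 - 32 * β t ^ 2))
        (nhdsWithin t₀ (Set.Ioo t₁ t₀)) (nhds c₁) := by
      have h := ((hlim.pow 2).const_mul 32).const_sub (c₁ ^ 2) |>.sqrt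
      simpa [Real.sqrt_sq hc₁.le] using h
    have hq := (hs.const_mul (-16)).div (hs.const_add c₁) (by positivity)
    have hval : -16 * c₁ / (c₁ + c₁) = -8 := by
      field_simp
      norm_num
    rw [hval] at hq
    exact hq.congr' (eventually_nhdsWithin_of_forall fun t ht' => (hode t ht').symm)
  refine ⟨key, ?_⟩
  have h := ((key.add_const 16).pow 2).neg.div_const 8
  norm_num at h
  simpa using h
end

section
/- Let A₁, A₂ : (a, b) → ℝ be differentiable with A₁(t) > 0 and A₂(t) > 0 for all t. Then the pair of equations (A₂²)' = 2A₁ and (A₁A₂)' = 2A₂ holds on (a, b) if and only if the anti-self-duality equations A₁' = (2A₂² − A₁²)/A₂² and A₂' = A₁/A₂ hold on (a, b). -/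
/-!
By the product rule the two Hitchin-flow equations say, at each point separately,
`A₂ A₂' = A₁` and `A₁' A₂ + A₁ A₂' = 2 A₂`. Since `A₂` does not vanish, this linear
system in `(A₁', A₂')` has a unique solution, which is the anti-self-duality system.
-/

open Real Set

/-- for positive `A₁, A₂`, the Hitchin-flow equations `(A₂²)' = 2A₁`,
`(A₁A₂)' = 2A₂` are equivalent to the anti-self-duality equations
`A₁' = (2A₂² − A₁²)/A₂²`, `A₂' = A₁/A₂`. -/
theorem hitchin_flow_iff_asd (a b : ℝ) (A₁ A₂ A₁' A₂' : ℝ → ℝ)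
    (hd1 : ∀ t ∈ Set.Ioo a b, HasDerivAt A₁ (A₁' t) t)
    (hd2 : ∀ t ∈ Set.Ioo a b, HasDerivAt A₂ (A₂' t) t)
    (hp1 : ∀ t ∈ Set.Ioo a b, 0 < A₁ t)
    (hp2 : ∀ t ∈ Set.Ioo a b, 0 < A₂ t) :
    (∀ t ∈ Set.Ioo a b,
        HasDerivAt (fun s => A₂ s ^ 2) (2 * A₁ t) t ∧
        HasDerivAt (fun s => A₁ s * A₂ s) (2 * A₂ t) t) ↔
    (∀ t ∈ Set.Ioo a b,
        A₁' t = (2 * A₂ t ^ 2 - A₁ t ^ 2) / A₂ t ^ 2 ∧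
        A₂' t = A₁ t / A₂ t) := by
  refine forall₂_congr fun t ht => ?_
  have h2 : A₂ t ≠ 0 := (hp2 t ht).ne'
  have hsq : HasDerivAt (fun s => A₂ s ^ 2) (2 * A₂ t * A₂' t) t := by
    simpa using (hd2 t ht).fun_pow 2
  have hmul : HasDerivAt (fun s => A₁ s * A₂ s) (A₁' t * A₂ t + A₁ t * A₂' t) t :=
    (hd1 t ht).fun_mul (hd2 t ht)
  constructor
  · rintro ⟨h, k⟩
    -- Uniqueness of derivatives turns the flow equations into algebraic ones at `t`.
    have e1 : 2 * A₂ t * A₂' t = 2 * A₁ t := hsq.unique h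
    have e2 : A₁' t * A₂ t + A₁ t * A₂' t = 2 * A₂ t := hmul.unique k
    have e3 : A₂' t = A₁ t / A₂ t := by
      rw [eq_div_iff h2]
      linarith
    refine ⟨?_, e3⟩
    rw [eq_div_iff (pow_ne_zero 2 h2)]
    linear_combination A₂ t * e2 - A₁ t / 2 * e1
  · rintro ⟨e1, e2⟩
    constructor
    · convert hsq using 1
      rw [e2]
      field_simp
    · convert hmul using 1
      rw [e1, e2]
      field_simp
      ring
end
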